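/- For every λ > λ₀, letting b(p) := √(λ − 2Γ(p)) and z(p) := ∫_{p₀}^p b(p₀)³/b(s)³ ds for p ∈ [p₀,0], one has λ^{3/2}·z′(0) − g·z(0) > 0. -/

import Mathlib

/-!
Dividing by the positive factor `b(p₀)³` and using `λ = b(0)²`, the claim becomes
`g · ∫ (λ - 2Γ)^(-3/2) < 1`. For fixed `Γ`, this integral is strictly decreasing in `λ`, and the
normalization of `λ₀` says that `g` times its value at `λ₀` is `1`.
-/

open Set

open MeasureTheory

theorem mul_lt_of_mul_sSup_image_lt {X : Type*} [TopologicalSpace X] {s : Set X} {f : X → ℝ}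
    {m c : ℝ} (hs : IsCompact s) (hf : ContinuousOn f s) (hm : 0 ≤ m)
    (hc : m * sSup (f '' s) < c) {x : X} (hx : x ∈ s) : m * f x < c :=
  (mul_le_mul_of_nonneg_left (le_csSup (hs.bddAbove_image hf) (mem_image_of_mem f hx)) hm).trans_lt
    hc

theorem strictAntiOn_inv_sqrt_pow {n : ℕ} (hn : n ≠ 0) :
    StrictAntiOn (fun x : ℝ => (√x ^ n)⁻¹) (Ioi 0) := fun x hx _ _ hxy =>
  inv_strictAnti₀ (pow_pos (Real.sqrt_pos.2 hx) n)
    (pow_lt_pow_left₀ (Real.sqrt_lt_sqrt (le_of_lt hx) hxy) (Real.sqrt_nonneg x) hn)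

section

variable {a b c l : ℝ} {f φ : ℝ → ℝ}

theorem intervalIntegral_lt_of_lt_on_Ioo {F G : ℝ → ℝ} (hab : a < b)
    (hF : IntervalIntegrable F volume a b) (hG : IntervalIntegrable G volume a b)
    (hFG : ∀ x ∈ Ioo a b, F x < G x) :
    ∫ x in a..b, F x < ∫ x in a..b, G x := by
  have hpos : 0 < ∫ x in a..b, (G x - F x) :=
    intervalIntegral.intervalIntegral_pos_of_pos_on (hG.sub hF)
      (fun x hx => sub_pos.2 (hFG x hx)) hab
  rwa [intervalIntegral.integral_sub hG hF, sub_pos] at hpos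

theorem intervalIntegrable_comp_sub_of_antitoneOn (hφ : Measurable φ)
    (hφ_anti : AntitoneOn φ (Ioi 0)) (hφ_nonneg : ∀ x ∈ Ioi 0, 0 ≤ φ x) (hab : a ≤ b)
    (hf : AEMeasurable f (volume.restrict (Ioc a b))) (hfc : ∀ p ∈ Ioc a b, f p < c)
    (hint : IntervalIntegrable (fun p => φ (c - f p)) volume a b) (hcl : c ≤ l) :
    IntervalIntegrable (fun p => φ (l - f p)) volume a b := by
  rw [intervalIntegrable_iff_integrableOn_Ioc_of_le hab] at hint ⊢
  refine hint.mono' (hφ.comp_aemeasurable (hf.const_sub l)).aestronglyMeasurable ?_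
  refine ae_restrict_of_forall_mem measurableSet_Ioc fun p hp => ?_
  have hc : c - f p ∈ Ioi 0 := sub_pos.2 (hfc p hp)
  have hl : l - f p ∈ Ioi 0 := sub_pos.2 ((hfc p hp).trans_le hcl)
  rw [Real.norm_of_nonneg (hφ_nonneg _ hl)]
  exact hφ_anti hc hl (sub_le_sub_right hcl _)

theorem intervalIntegral_comp_sub_lt_of_strictAntiOn (hφ : Measurable φ)
    (hφ_anti : StrictAntiOn φ (Ioi 0)) (hφ_nonneg : ∀ x ∈ Ioi 0, 0 ≤ φ x) (hab : a < b)
    (hf : AEMeasurable f (volume.restrict (Ioc a b))) (hfc : ∀ p ∈ Ioc a b, f p < c)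
    (hint : IntervalIntegrable (fun p => φ (c - f p)) volume a b) (hcl : c < l) :
    ∫ p in a..b, φ (l - f p) < ∫ p in a..b, φ (c - f p) := by
  refine intervalIntegral_lt_of_lt_on_Ioo hab (intervalIntegrable_comp_sub_of_antitoneOn hφ
    hφ_anti.antitoneOn hφ_nonneg hab.le hf hfc hint hcl.le) hint fun p hp => ?_
  have hp' : f p < c := hfc p (Ioo_subset_Ioc_self hp)
  exact hφ_anti (sub_pos.2 hp') (sub_pos.2 (hp'.trans hcl)) (sub_lt_sub_right hcl _)

end

theorem stmt_7_general {a b g lam₀ lam : ℝ} {n : ℕ} (hn : n ≠ 0) (hab : a < b) (hg : 0 < g)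
    {Γ : ℝ → ℝ} (hΓ : AEMeasurable Γ (volume.restrict (Ioc a b)))
    (hlam₀ : ∀ p ∈ Icc a b, 2 * Γ p < lam₀)
    (hlam₀' : g * ∫ p in a..b, (√(lam₀ - 2 * Γ p) ^ n)⁻¹ = 1) (hlam : lam₀ < lam) :
    0 < √(lam - 2 * Γ b) ^ n * (√(lam - 2 * Γ a) ^ n / √(lam - 2 * Γ b) ^ n)
      - g * ∫ s in a..b, √(lam - 2 * Γ a) ^ n / √(lam - 2 * Γ s) ^ n := by
  have hpos : ∀ p ∈ Icc a b, 0 < √(lam - 2 * Γ p) ^ n := fun p hp =>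
    pow_pos (Real.sqrt_pos.2 (sub_pos.2 ((hlam₀ p hp).trans hlam))) n
  -- A function that is not integrable has integral `0`, which `hlam₀'` excludes.
  have hint : IntervalIntegrable (fun p => (√(lam₀ - 2 * Γ p) ^ n)⁻¹) volume a b :=
    intervalIntegral.intervalIntegrable_of_integral_ne_zero (right_ne_zero_of_mul_eq_one hlam₀')
  have hanti : ∫ p in a..b, (√(lam - 2 * Γ p) ^ n)⁻¹ < ∫ p in a..b, (√(lam₀ - 2 * Γ p) ^ n)⁻¹ :=
    intervalIntegral_comp_sub_lt_of_strictAntiOn (by fun_prop) (strictAntiOn_inv_sqrt_pow hn)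
      (fun _ _ => by positivity) hab (hΓ.const_mul 2)
      (fun p hp => hlam₀ p (Ioc_subset_Icc_self hp)) hint hlam
  have hlt : g * ∫ p in a..b, (√(lam - 2 * Γ p) ^ n)⁻¹ < 1 :=
    hlam₀' ▸ mul_lt_mul_of_pos_left hanti hg
  have hb : √(lam - 2 * Γ b) ^ n ≠ 0 := (hpos b (right_mem_Icc.2 hab.le)).ne'
  calc 0 < √(lam - 2 * Γ a) ^ n * (1 - g * ∫ s in a..b, (√(lam - 2 * Γ s) ^ n)⁻¹) :=
        mul_pos (hpos a (left_mem_Icc.2 hab.le)) (sub_pos.2 hlt)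
    _ = _ := by
        rw [mul_div_cancel₀ _ hb]
        simp only [div_eq_mul_inv, intervalIntegral.integral_const_mul]
        ring

/-- For every `λ > λ₀`, with `b(p) := √(λ − 2Γ(p))` and
`z(p) := ∫_{p₀}^p b(p₀)³/b(s)³ ds`, one has `λ^{3/2}·z′(0) − g·z(0) > 0`
(here `z′(0) = b(p₀)³/b(0)³`). -/
theorem stmt_7 (p₀ g lam₀ lam : ℝ) (hp₀ : p₀ < 0) (hg : 0 < g)
    (Γ : ℝ → ℝ) (K : NNReal) (hΓ : LipschitzOnWith K Γ (Set.Icc p₀ 0)) (hΓ0 : Γ 0 = 0)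
    (hlam₀ : 2 * sSup (Γ '' Set.Icc p₀ 0) < lam₀)
    (hlam₀' : g * ∫ p in p₀..0, (Real.sqrt (lam₀ - 2 * Γ p) ^ 3)⁻¹ = 1)
    (hlam : lam₀ < lam) :
    Real.sqrt lam ^ 3
        * (Real.sqrt (lam - 2 * Γ p₀) ^ 3 / Real.sqrt (lam - 2 * Γ 0) ^ 3)
      - g * ∫ s in p₀..0, Real.sqrt (lam - 2 * Γ p₀) ^ 3 / Real.sqrt (lam - 2 * Γ s) ^ 3
      > 0 := by
  simpa only [hΓ0, mul_zero, sub_zero] using stmt_7_general three_ne_zero hp₀ hg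
    ((hΓ.continuousOn.mono Ioc_subset_Icc_self).aemeasurable measurableSet_Ioc)
    (fun _ => mul_lt_of_mul_sSup_image_lt isCompact_Icc hΓ.continuousOn zero_le_two hlam₀)
    hlam₀' hlam
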